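/- arXiv:2009.06189 — 2 statements merged into one kernel-verified Lean document; each statement's English description precedes it below -/
import Mathlib

section
/- For every n ≥ 1 and every z ∈ ℂ, ∫₀¹ log‖B_n(x,z)‖ dx ≥ log‖M^n‖, where M is the constant matrix M = [[−(αz+2λ), α],[−α, 0]]. -/
open scoped Real

/-- The quasi-periodic potential `v(x) = 2λcos(2πx)/(1 - αcos(2πx))`. -/
noncomputable def potV (α lam : ℝ) (x : ℝ) : ℝ :=
  2 * lam * Real.cos (2 * Real.pi * x) / (1 - α * Real.cos (2 * Real.pi * x))

/-- One-step transfer matrix `A(x,z) = [[z - V x, -1],[1,0]]`. -/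
noncomputable def tMat (V : ℝ → ℝ) (x : ℝ) (z : ℂ) : Matrix (Fin 2) (Fin 2) ℂ :=
  !![z - (V x : ℝ), -1; 1, 0]

/-- The `n`-step transfer matrix `A_n(x,z) = A(x+(n-1)b,z) ⋯ A(x+b,z) A(x,z)`. -/
noncomputable def tProd (V : ℝ → ℝ) (b : ℝ) (n : ℕ) (x : ℝ) (z : ℂ) :
    Matrix (Fin 2) (Fin 2) ℂ :=
  (((List.range n).reverse).map (fun j => tMat V (x + (j : ℝ) * b) z)).prod

/-- The operator norm of a 2×2 complex matrix, acting on the Euclidean space `ℂ²`. -/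
noncomputable def opNorm2 (M : Matrix (Fin 2) (Fin 2) ℂ) : ℝ :=
  ‖Matrix.toEuclideanCLM (𝕜 := ℂ) M‖

/-- The Lyapunov exponent `L(z) = lim_n (1/n)∫₀¹ log‖A_n(x,z)‖ dx`; the limit exists and
equals `inf_{n ≥ 1} (1/n)∫₀¹ log‖A_n(x,z)‖ dx` by subadditivity, so we take that as the
definition. -/
noncomputable def lyap (V : ℝ → ℝ) (b : ℝ) (z : ℂ) : ℝ :=
  ⨅ n : ℕ+, ((n : ℝ))⁻¹ * ∫ x in (0:ℝ)..(1:ℝ), Real.log (opNorm2 (tProd V b n x z))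

/-- The matrix `B(x,z) = (2 - 2αcos(2πx)) A(x,z)`. -/
noncomputable def bMat (α lam : ℝ) (x : ℝ) (z : ℂ) : Matrix (Fin 2) (Fin 2) ℂ :=
  ((2 - 2 * α * Real.cos (2 * Real.pi * x) : ℝ) : ℂ) • tMat (potV α lam) x z

/-- The product `B_n(x,z) = B(x+(n-1)b,z) ⋯ B(x+b,z) B(x,z)`. -/
noncomputable def bProd (α lam b : ℝ) (n : ℕ) (x : ℝ) (z : ℂ) :
    Matrix (Fin 2) (Fin 2) ℂ :=
  (((List.range n).reverse).map (fun j => bMat α lam (x + (j : ℝ) * b) z)).prod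


lemma jensen_aux {E : Type*} [NormedAddCommGroup E] [NormedSpace ℂ E] (F : ℂ → E)
    (hF : Differentiable ℂ F) (h0 : F 0 ≠ 0) (h1 : ∀ w ∈ Metric.sphere (0 : ℂ) 1, F w ≠ 0) :
    Real.log ‖F 0‖ ≤ Real.circleAverage (fun w => Real.log ‖F w‖) 0 1 := by
  obtain ⟨w0, hw0, hmin⟩ := (isCompact_sphere (0 : ℂ) 1).exists_isMinOn
    (NormedSpace.sphere_nonempty.2 zero_le_one) hF.continuous.norm.continuousOn
  have hm : 0 < ‖F w0‖ := norm_pos_iff.2 (h1 w0 hw0)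
  set m := ‖F w0‖ with hmdef
  obtain ⟨g, hg1, hg2⟩ := exists_dual_vector ℂ (F 0) (norm_ne_zero_iff.2 h0)
  set f : ℂ → ℂ := fun w => ((m⁻¹ : ℝ) : ℂ) * g (F w) with hf
  have hfd : Differentiable ℂ f := by
    have : Differentiable ℂ (fun w => g (F w)) := g.differentiable.comp hF
    exact this.const_mul _
  have hfa : AnalyticOnNhd ℂ f Set.univ := hfd.differentiableOn.analyticOnNhd isOpen_univ
  have hf0 : ‖f 0‖ = m⁻¹ * ‖F 0‖ := by
    simp [hf, hg2, abs_of_pos hm]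
  have hF0 : 0 < ‖F 0‖ := norm_pos_iff.2 h0
  have hf0' : f 0 ≠ 0 := by
    rw [← norm_pos_iff, hf0]; positivity
  have hJ := AnalyticOnNhd.circleAverage_log_norm (c := 0) (R := 1) one_ne_zero
    (hfa.mono (Set.subset_univ _)) hf0'
  have hpos : 0 ≤ ∑ᶠ u, MeromorphicOn.divisor f (Metric.closedBall 0 |1|) u
      * Real.log (1 * ‖0 - u‖⁻¹) := by
    apply finsum_nonneg
    intro u
    by_cases hu : u ∈ Metric.closedBall (0 : ℂ) |1|
    · apply mul_nonneg
      · exact_mod_cast (MeromorphicOn.AnalyticOnNhd.divisor_nonneg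
          (hfa.mono (Set.subset_univ _)) u)
      · simp only [zero_sub, norm_neg, one_mul, Real.log_inv]
        have : ‖u‖ ≤ 1 := by simpa using hu
        have := Real.log_nonpos (norm_nonneg u) this
        linarith
    · rw [Function.locallyFinsuppWithin.apply_eq_zero_of_notMem _ hu]; simp
  have hci : CircleIntegrable (fun w => Real.log ‖f w‖) 0 1 :=
    MeromorphicOn.circleIntegrable_log_norm (hfa.mono (Set.subset_univ _)).meromorphicOn
  have hci2 : CircleIntegrable (fun w => Real.log ‖F w‖) 0 1 := by
    apply ContinuousOn.circleIntegrable zero_le_one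
    exact hF.continuous.norm.continuousOn.log fun w hw => norm_ne_zero_iff.2 (h1 w hw)
  have hcc : CircleIntegrable (fun _ : ℂ => - Real.log m) 0 1 :=
    circleIntegrable_const _ _ _
  have hle : Real.circleAverage (fun w => Real.log ‖f w‖) 0 1 ≤
      Real.circleAverage (fun w => Real.log ‖F w‖ + (- Real.log m)) 0 1 := by
    apply Real.circleAverage_mono hci (hci2.add hcc)
    intro w hw
    rw [abs_one] at hw
    have hmw : m ≤ ‖F w‖ := hmin hw
    change Real.log ‖f w‖ ≤ Real.log ‖F w‖ + - Real.log m
    by_cases hfw : f w = 0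
    · have := Real.log_le_log hm hmw
      simp only [hfw, norm_zero, Real.log_zero]
      linarith
    · have h2 : ‖f w‖ ≤ m⁻¹ * ‖F w‖ := by
        have := g.le_opNorm (F w)
        rw [hg1, one_mul] at this
        simp only [hf, norm_mul, Complex.norm_real, Real.norm_eq_abs, abs_inv, abs_of_pos hm]
        gcongr
      have := Real.log_le_log (norm_pos_iff.2 hfw) h2
      rw [Real.log_mul (by positivity) (by linarith), Real.log_inv] at this
      linarith
  rw [Real.circleAverage_fun_add hci2 hcc, Real.circleAverage_const] at hle
  rw [hf0, Real.log_mul (by positivity) (by positivity), Real.log_inv] at hJ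
  linarith

/-- the polynomial matrix -/
noncomputable def qMat (α lam : ℝ) (z u : ℂ) : Matrix (Fin 2) (Fin 2) ℂ :=
  !![-((α : ℂ) * z + 2 * (lam : ℂ)), (α : ℂ); -(α : ℂ), 0] + u • !![2 * z, -2; 2, 0]
    + u ^ 2 • !![-((α : ℂ) * z + 2 * (lam : ℂ)), (α : ℂ); -(α : ℂ), 0]

lemma bScal_pos (α x : ℝ) (hα : α ∈ Set.Ioo (-1 : ℝ) 1) :
    0 < 1 - α * Real.cos (2 * Real.pi * x) := by
  have h1 := Real.neg_one_le_cos (2 * Real.pi * x)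
  have h2 := Real.cos_le_one (2 * Real.pi * x)
  obtain ⟨h3, h4⟩ := hα
  have h5 : |α * Real.cos (2 * Real.pi * x)| < 1 := by
    rw [abs_mul]
    have h6 : |α| < 1 := abs_lt.2 ⟨h3, h4⟩
    have h7 := Real.abs_cos_le_one (2 * Real.pi * x)
    nlinarith [abs_nonneg α, abs_nonneg (Real.cos (2 * Real.pi * x))]
  linarith [(abs_lt.1 h5).2]

lemma qMat_eq (α lam : ℝ) (hα : α ∈ Set.Ioo (-1 : ℝ) 1) (z : ℂ) (x : ℝ) :
    qMat α lam z (Complex.exp (2 * Real.pi * x * Complex.I)) =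
      Complex.exp (2 * Real.pi * x * Complex.I) • bMat α lam x z := by
  have hp := bScal_pos α x hα
  set u := Complex.exp (2 * Real.pi * x * Complex.I) with hu
  have hu0 : u ≠ 0 := Complex.exp_ne_zero _
  have hc : (Real.cos (2 * Real.pi * x) : ℂ) = (u + u⁻¹) / 2 := by
    rw [hu, ← Complex.exp_neg, Complex.ofReal_cos, Complex.cos]
    push_cast
    ring_nf
  have hp' : (1 : ℂ) - α * ((u + u⁻¹) / 2) ≠ 0 := by
    rw [← hc]; exact_mod_cast hp.ne'
  have key : ((2 - 2 * α * Real.cos (2 * Real.pi * x) : ℝ) : ℂ) * (z - (potV α lam x : ℝ)) =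
      2 * z - (α * z + 2 * lam) * (u + u⁻¹) := by
    unfold potV
    rw [Complex.ofReal_div]
    push_cast [-Complex.ofReal_cos]
    rw [hc]
    generalize u + u⁻¹ = t at *
    have hp2 : (2 : ℂ) - α * t ≠ 0 := fun h => hp' (by linear_combination h / 2)
    field_simp
    ring
  ext i j
  fin_cases i <;> fin_cases j
  · simp only [qMat, bMat, tMat, Matrix.smul_apply, Matrix.add_apply, smul_eq_mul]
    simp [-Complex.ofReal_cos, -Complex.ofReal_sub] at key ⊢
    rw [key]
    field_simp
    ring
  · simp only [qMat, bMat, tMat, Matrix.smul_apply, Matrix.add_apply, smul_eq_mul]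
    push_cast [-Complex.ofReal_cos]
    rw [hc]
    simp
    field_simp
    ring
  · simp only [qMat, bMat, tMat, Matrix.smul_apply, Matrix.add_apply, smul_eq_mul]
    push_cast [-Complex.ofReal_cos]
    rw [hc]
    simp
    field_simp
    ring
  · simp [qMat, bMat, tMat]

/-- product of the polynomial matrices -/
noncomputable def qProd (α lam b : ℝ) (z : ℂ) : ℕ → ℂ → Matrix (Fin 2) (Fin 2) ℂ
  | 0, _ => 1
  | n + 1, w => qMat α lam z (Complex.exp (2 * Real.pi * ((n : ℝ) * b : ℝ) * Complex.I) * w)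
      * qProd α lam b z n w

lemma bProd_succ (α lam b : ℝ) (n : ℕ) (x : ℝ) (z : ℂ) :
    bProd α lam b (n + 1) x z = bMat α lam (x + (n : ℝ) * b) z * bProd α lam b n x z := by
  simp [bProd, List.range_succ]

lemma qProd_zero (α lam b : ℝ) (z : ℂ) (n : ℕ) :
    qProd α lam b z n 0 =
      (!![-((α : ℂ) * z + 2 * (lam : ℂ)), (α : ℂ); -(α : ℂ), 0]) ^ n := by
  induction n with
  | zero => simp [qProd]
  | succ n ih =>
    rw [qProd, ih, pow_succ']
    congr 1
    rw [mul_zero, qMat]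
    simp

lemma qProd_eq (α lam b : ℝ) (hα : α ∈ Set.Ioo (-1 : ℝ) 1) (z : ℂ) (n : ℕ) (x : ℝ) :
    ∃ c : ℂ, ‖c‖ = 1 ∧ qProd α lam b z n (Complex.exp (2 * Real.pi * x * Complex.I)) =
      c • bProd α lam b n x z := by
  induction n with
  | zero => exact ⟨1, by simp, by simp [qProd, bProd]⟩
  | succ n ih =>
    obtain ⟨c, hc, h⟩ := ih
    refine ⟨Complex.exp (2 * Real.pi * ((x + n * b : ℝ)) * Complex.I) * c, ?_, ?_⟩
    · rw [norm_mul, hc, mul_one]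
      have := Complex.norm_exp_ofReal_mul_I (2 * Real.pi * (x + n * b))
      push_cast at this ⊢
      exact this
    · have : Complex.exp (2 * Real.pi * ((n : ℝ) * b : ℝ) * Complex.I) *
          Complex.exp (2 * Real.pi * x * Complex.I) =
          Complex.exp (2 * Real.pi * ((x + n * b : ℝ)) * Complex.I) := by
        rw [← Complex.exp_add]; congr 1; push_cast; ring
      rw [qProd, this, qMat_eq α lam hα, h, bProd_succ, smul_mul_smul_comm]

lemma qProd_diff (α lam b : ℝ) (z : ℂ) (n : ℕ) :
    Differentiable ℂ (fun w => Matrix.toEuclideanCLM (𝕜 := ℂ) (qProd α lam b z n w)) := by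
  induction n with
  | zero => simp [qProd]
  | succ n ih =>
    simp only [qProd, map_mul, qMat, map_add, map_smul]
    refine Differentiable.mul ?_ ih
    fun_prop

lemma det_bMat (α lam : ℝ) (x : ℝ) (z : ℂ) :
    (bMat α lam x z).det = ((2 * (1 - α * Real.cos (2 * Real.pi * x)) : ℝ) : ℂ) ^ 2 := by
  simp only [bMat, tMat, Matrix.det_smul, Matrix.det_fin_two_of]
  simp
  ring

lemma det_bProd_ne (α lam b : ℝ) (hα : α ∈ Set.Ioo (-1 : ℝ) 1) (n : ℕ) (x : ℝ) (z : ℂ) :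
    (bProd α lam b n x z).det ≠ 0 := by
  induction n with
  | zero => simp [bProd]
  | succ n ih =>
    rw [bProd_succ, Matrix.det_mul, det_bMat]
    refine mul_ne_zero (pow_ne_zero _ ?_) ih
    have := bScal_pos α (x + n * b) hα
    exact_mod_cast (by positivity)

lemma det_bProd_zero (lam b : ℝ) (n : ℕ) (x : ℝ) (z : ℂ) :
    (bProd 0 lam b n x z).det = 4 ^ n := by
  induction n with
  | zero => simp [bProd]
  | succ n ih =>
    rw [bProd_succ, Matrix.det_mul, det_bMat, ih]
    push_cast
    ring

lemma entry_le (A : Matrix (Fin 2) (Fin 2) ℂ) (i j : Fin 2) : ‖A i j‖ ≤ opNorm2 A := by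
  have h := (Matrix.toEuclideanCLM (𝕜 := ℂ) A).le_opNorm (EuclideanSpace.single j 1)
  have h2 := PiLp.norm_apply_le (Matrix.toEuclideanCLM (𝕜 := ℂ) A (EuclideanSpace.single j 1)) i
  rw [Matrix.ofLp_toEuclideanCLM] at h2
  simp at h h2
  exact h2.trans h

lemma det_le (A : Matrix (Fin 2) (Fin 2) ℂ) : ‖A.det‖ ≤ 2 * opNorm2 A ^ 2 := by
  rw [Matrix.det_fin_two]
  have h : ∀ i j k l, ‖A i j * A k l‖ ≤ opNorm2 A ^ 2 := fun i j k l => by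
    rw [norm_mul, sq]
    exact mul_le_mul (entry_le ..) (entry_le ..) (norm_nonneg _) (norm_nonneg _)
  have := norm_sub_le (A 0 0 * A 1 1) (A 0 1 * A 1 0)
  linarith [h 0 0 1 1, h 0 1 1 0]

/-- for every `n ≥ 1` and `z ∈ ℂ`,
`∫₀¹ log‖B_n(x,z)‖ dx ≥ log‖Mⁿ‖` where `M = [[-(αz+2λ), α],[-α, 0]]`. -/
theorem integral_log_bProd_ge (α lam b : ℝ) (hα : α ∈ Set.Ioo (-1 : ℝ) 1)
    (hb : Irrational b) (n : ℕ) (hn : 1 ≤ n) (z : ℂ) :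
    Real.log (opNorm2 ((!![-((α : ℂ) * z + 2 * (lam : ℂ)), (α : ℂ); -(α : ℂ), 0]) ^ n)) ≤
      ∫ x in (0:ℝ)..(1:ℝ), Real.log (opNorm2 (bProd α lam b n x z)) := by
  have hnorm : ∀ x : ℝ, ‖Matrix.toEuclideanCLM (𝕜 := ℂ)
      (qProd α lam b z n (Complex.exp (2 * Real.pi * x * Complex.I)))‖ =
      opNorm2 (bProd α lam b n x z) := fun x => by
    obtain ⟨c, hc, h⟩ := qProd_eq α lam b hα z n x
    rw [h, map_smul, norm_smul, hc, one_mul, opNorm2]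
  have hpos : ∀ x : ℝ, 0 < opNorm2 (bProd α lam b n x z) := fun x => by
    have h1 := det_le (bProd α lam b n x z)
    have h2 := norm_pos_iff.2 (det_bProd_ne α lam b hα n x z)
    have h3 : 0 ≤ opNorm2 (bProd α lam b n x z) := norm_nonneg _
    rcases h3.lt_or_eq with h | h
    · exact h
    · rw [← h] at h1
      norm_num at h1 
      rw [h1] at h2
      simp at h2
  by_cases h0 : (!![-((α : ℂ) * z + 2 * (lam : ℂ)), (α : ℂ); -(α : ℂ), 0]) ^ n = 0
  · have hα0 : α = 0 := by
      have := congrArg Matrix.det h0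
      rw [Matrix.det_pow, Matrix.det_fin_two_of, Matrix.det_zero] at this
      simpa using eq_zero_of_pow_eq_zero this
    subst hα0
    rw [h0]
    simp only [opNorm2, map_zero, norm_zero, Real.log_zero]
    apply intervalIntegral.integral_nonneg zero_le_one
    intro x _
    apply Real.log_nonneg
    have h1 := det_le (bProd 0 lam b n x z)
    rw [det_bProd_zero, norm_pow] at h1
    have h4 : (4 : ℝ) ≤ 4 ^ n := le_self_pow₀ (by norm_num) (by omega)
    have h5 := hpos x
    norm_num at h1
    change 1 ≤ opNorm2 (bProd 0 lam b n x z)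
    nlinarith
  · have hJ := jensen_aux
      (fun w => Matrix.toEuclideanCLM (𝕜 := ℂ) (qProd α lam b z n w)) (qProd_diff α lam b z n) (by
        simp only [qProd_zero]
        exact (map_ne_zero_iff _ (Matrix.toEuclideanCLM (𝕜 := ℂ)).injective).2 h0) (by
        intro w hw
        have hw1 : ‖w‖ = 1 := by simpa using hw
        have hwe : w = Complex.exp (2 * Real.pi * ((w.arg / (2 * Real.pi) : ℝ)) * Complex.I) := by
          have := Complex.norm_mul_exp_arg_mul_I w
          rw [hw1] at this
          have hpi : (Real.pi : ℂ) ≠ 0 := by exact_mod_cast Real.pi_ne_zero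
          push_cast
          rw [mul_div_cancel₀ _ (by simpa using hpi)]
          simpa using this.symm
        rw [← norm_pos_iff, hwe, hnorm]
        exact hpos _)
    simp only [qProd_zero] at hJ
    refine hJ.trans (le_of_eq ?_)
    rw [Real.circleAverage_def]
    have := intervalIntegral.smul_integral_comp_mul_left (a := 0) (b := 1) (fun θ => Real.log
      ‖Matrix.toEuclideanCLM (𝕜 := ℂ) (qProd α lam b z n (circleMap 0 1 θ))‖) (2 * Real.pi)
    rw [mul_zero, mul_one] at this
    rw [← this, smul_smul, inv_mul_cancel₀ (by positivity), one_smul]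
    apply intervalIntegral.integral_congr
    intro x _
    simp only
    rw [← hnorm]
    simp [circleMap]
end

section
/- For every α ∈ (−1,1), ∫₀¹ log|2 − 2αcos(2πx)| dx = log(1 + √(1−α²)). -/
open scoped Real

/-- for every `α ∈ (-1,1)`,
`∫₀¹ log|2 - 2αcos(2πx)| dx = log(1 + √(1-α²))`. -/
theorem integral_log_abs_two_sub_cos (α : ℝ) (hα : α ∈ Set.Ioo (-1 : ℝ) 1) :
    ∫ x in (0:ℝ)..(1:ℝ), Real.log |2 - 2 * α * Real.cos (2 * Real.pi * x)| =
      Real.log (1 + Real.sqrt (1 - α ^ 2)) := by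
  obtain ⟨h1, h2⟩ := hα
  have hpos : 0 < 1 - α ^ 2 := by nlinarith
  set s := Real.sqrt (1 - α ^ 2) with hs
  have hs0 : 0 < s := Real.sqrt_pos.mpr hpos
  have hs2 : s ^ 2 = 1 - α ^ 2 := Real.sq_sqrt hpos.le
  obtain ⟨r, hr⟩ : ∃ r : ℝ, r = α / (1 + s) := ⟨_, rfl⟩
  have hrα : (1 + s) * r = α := by rw [hr]; field_simp
  have hr2 : (1 + s) * (1 + r ^ 2) = 2 := by
    rw [hr]; field_simp; nlinarith
  have hr1 : |r| < 1 := by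
    rw [← sq_lt_one_iff_abs_lt_one]
    nlinarith [sq_nonneg r]
  have hsq : ∀ θ : ℝ, ‖circleMap 0 1 θ - (r : ℂ)‖ ^ 2 = 1 - 2 * r * Real.cos θ + r ^ 2 := by
    intro θ
    rw [← Complex.normSq_eq_norm_sq, Complex.normSq_apply]
    simp only [circleMap, zero_add, Complex.ofReal_one, one_mul, Complex.sub_re, Complex.sub_im,
      Complex.exp_ofReal_mul_I_re, Complex.exp_ofReal_mul_I_im, Complex.ofReal_re,
      Complex.ofReal_im]
    nlinarith [Real.sin_sq_add_cos_sq θ]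
  have hne : ∀ θ : ℝ, 0 < ‖circleMap 0 1 θ - (r : ℂ)‖ := by
    intro θ
    rw [norm_pos_iff, sub_ne_zero]
    intro h
    have := congrArg norm h
    simp at this
    linarith
  have hpt : ∀ θ : ℝ, Real.log |2 - 2 * α * Real.cos θ| =
      Real.log (1 + s) + 2 * Real.log ‖circleMap 0 1 θ - (r : ℂ)‖ := by
    intro θ
    have e : 2 - 2 * α * Real.cos θ = (1 + s) * ‖circleMap 0 1 θ - (r : ℂ)‖ ^ 2 := by
      rw [hsq]
      linear_combination (2 * Real.cos θ) * hrα - hr2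
    have := pow_pos (hne θ) 2
    rw [Real.log_abs, e, Real.log_mul (by positivity) this.ne', Real.log_pow]
    norm_num
  have havg := circleAverage_log_norm_sub_const₀ (a := (r : ℂ)) (by simpa using hr1)
  rw [Real.circleAverage_def, smul_eq_mul] at havg
  have hint : ∫ θ in (0:ℝ)..2 * π, Real.log ‖circleMap 0 1 θ - (r : ℂ)‖ = 0 := by
    rcases mul_eq_zero.mp havg with h | h
    · exact absurd h (by positivity)
    · exact h
  have hcont : Continuous fun θ : ℝ => Real.log ‖circleMap 0 1 θ - (r : ℂ)‖ :=
    Continuous.log (((continuous_circleMap 0 1).sub continuous_const).norm)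
      (fun θ => (hne θ).ne')
  rw [intervalIntegral.integral_comp_mul_left
    (fun θ => Real.log |2 - 2 * α * Real.cos θ|) (by positivity : 2 * π ≠ 0)]
  simp_rw [hpt]
  rw [intervalIntegral.integral_add (by simp) ((hcont.const_mul 2).intervalIntegrable _ _),
    intervalIntegral.integral_const_mul]
  simp only [mul_zero, mul_one, hint, intervalIntegral.integral_const, smul_eq_mul, sub_zero,
    add_zero]
  field_simp
end
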